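/- (Theorem 2, asymptotic convergence under partial asynchrony.) Let W ∈ ℝ^{n×n} be symmetric, entrywise nonnegative, stochastic with w_{ii} > 0; let each f_i : ℝ^d → ℝ be convex with L_i-Lipschitz gradient and each h_i : ℝ^d → ℝ ∪ {+∞} proper, closed, convex; let 0 < α < 2·min_i (w_{ii}/L_i); and assume the penalized problem min_x Σ_i (f_i(x_i)+h_i(x_i)) + (1/(2α))⟨x,(I−𝐖)x⟩ has a (closed, nonempty) optimal solution set. Consider iterates x^k ∈ (ℝ^d)^n obeying the asynchronous Prox-DGD recursion (for k ∈ K_i: x_i^{k+1} = prox_{αh_i}( Σ_j w_{ij} x_j^{s_{ij}^k} − α∇f_i(x_i^k) ) with s_{ii}^k = k; otherwise x_i^{k+1} = x_i^k). Assume partial asynchrony: there exist B, D ∈ ℕ such that for every i and every k, {k,…,k+B} ∩ K_i ≠ ∅, and k − D ≤ s_{ij}^k ≤ k for all i, all j, and all k ∈ K_i. Assume further the underlying graph (edges {i,j} with w_{ij} > 0, i ≠ j) is connected. Then (x^k) converges to a fixed point x* of synchronous Prox-DGD, i.e., x*_i = prox_{αh_i}( Σ_j w_{ij} x*_j − α∇f_i(x*_i)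 ) for all i. -/

import Mathlib

open scoped RealInnerProductSpace
open Filter

/-- A function `h : ℝ^d → ℝ ∪ {+∞}` (modeled as `EReal`-valued, never `⊥`) is proper,
closed (lower semicontinuous), and convex. -/
def ProperClosedConvex {d : ℕ} (h : EuclideanSpace ℝ (Fin d) → EReal) : Prop :=
  (∃ x, h x ≠ ⊤) ∧ (∀ x, h x ≠ ⊥) ∧ LowerSemicontinuous h ∧
    ∀ x y : EuclideanSpace ℝ (Fin d), ∀ t : ℝ, 0 ≤ t → t ≤ 1 →
      h (t • x + (1 - t) • y) ≤ (t : EReal) * h x + ((1 - t : ℝ) : EReal) * h y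

/-- `IsProxPt α h u p` says `p` minimizes `y ↦ α·h(y) + ½‖y − u‖²`, i.e.
`p = prox_{αh}(u)`. -/
def IsProxPt {d : ℕ} (α : ℝ) (h : EuclideanSpace ℝ (Fin d) → EReal)
    (u p : EuclideanSpace ℝ (Fin d)) : Prop :=
  ∀ y, (α : EReal) * h p + ((1 / 2 * ‖p - u‖ ^ 2 : ℝ) : EReal)
      ≤ (α : EReal) * h y + ((1 / 2 * ‖y - u‖ ^ 2 : ℝ) : EReal)


section helpers

variable {d : ℕ}

local notation "𝓔" => EuclideanSpace ℝ (Fin d)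

lemma prox_ne_top {α : ℝ} (hα : 0 < α) {h : 𝓔 → EReal} (hh : ProperClosedConvex h)
    {u p : 𝓔} (hp : IsProxPt α h u p) : h p ≠ ⊤ := by
  obtain ⟨⟨y, hy⟩, hbot, -, -⟩ := hh
  intro htop
  have h1 := hp y
  rw [htop, EReal.coe_mul_top_of_pos hα, EReal.top_add_coe] at h1
  lift h y to ℝ using ⟨hy, hbot y⟩ with b
  rw [← EReal.coe_mul, ← EReal.coe_add, top_le_iff] at h1
  exact EReal.coe_ne_top _ h1

lemma prox_real {α : ℝ} (hα : 0 < α) {h : 𝓔 → EReal} (hh : ProperClosedConvex h)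
    {u p : 𝓔} (hp : IsProxPt α h u p) {y : 𝓔} (hy : h y ≠ ⊤) :
    α * (h p).toReal + 1 / 2 * ‖p - u‖ ^ 2 ≤ α * (h y).toReal + 1 / 2 * ‖y - u‖ ^ 2 := by
  have h0 := prox_ne_top hα hh hp
  have h1 := hp y
  have hbot := hh.2.1
  rw [← EReal.coe_toReal h0 (hbot p), ← EReal.coe_toReal hy (hbot y)] at h1
  exact_mod_cast h1

lemma prox_of_real {α : ℝ} (hα : 0 < α) {h : 𝓔 → EReal} (hh : ProperClosedConvex h)
    {u p : 𝓔} (h0 : h p ≠ ⊤) (hp : ∀ y, h y ≠ ⊤ → 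
      α * (h p).toReal + 1 / 2 * ‖p - u‖ ^ 2 ≤ α * (h y).toReal + 1 / 2 * ‖y - u‖ ^ 2) :
    IsProxPt α h u p := by
  intro y
  by_cases hy : h y = ⊤
  · rw [hy, EReal.coe_mul_top_of_pos hα, EReal.top_add_coe]
    exact le_top
  · have hbot := hh.2.1
    have := hp y hy
    rw [← EReal.coe_toReal h0 (hbot p), ← EReal.coe_toReal hy (hbot y)]
    exact_mod_cast this

lemma conv_real {h : 𝓔 → EReal} (hh : ProperClosedConvex h)
    {p y : 𝓔} (h0 : h p ≠ ⊤) (hy : h y ≠ ⊤) {t : ℝ} (ht : 0 ≤ t) (ht1 : t ≤ 1) :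
    h (p + t • (y - p)) ≠ ⊤ ∧
      (h (p + t • (y - p))).toReal ≤ t * (h y).toReal + (1 - t) * (h p).toReal := by
  have hbot := hh.2.1
  have h1 := hh.2.2.2 y p t ht ht1
  have e : t • y + (1 - t) • p = p + t • (y - p) := by module
  rw [e, ← EReal.coe_toReal h0 (hbot p), ← EReal.coe_toReal hy (hbot y)] at h1
  have h2 : h (p + t • (y - p)) ≤ ((t * (h y).toReal + (1 - t) * (h p).toReal : ℝ) : EReal) := by
    exact_mod_cast h1
  have h3 : h (p + t • (y - p)) ≠ ⊤ := by
    intro h4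
    rw [h4, top_le_iff] at h2
    exact EReal.coe_ne_top _ h2
  refine ⟨h3, ?_⟩
  rw [← EReal.coe_toReal h3 (hbot _)] at h2
  exact_mod_cast h2

lemma lim_ineq {a b c : ℝ} (H : ∀ t : ℝ, 0 < t → t ≤ 1 → t * a ≤ t * b + t ^ 2 * c) : a ≤ b := by
  by_contra hlt
  push Not at hlt
  have hc : 0 < |c| + 1 := by positivity
  have ht : 0 < min 1 ((a - b) / (2 * (|c| + 1))) := by
    apply lt_min one_pos
    apply div_pos <;> linarith
  have h1 := H _ ht (min_le_left _ _)
  have h3 := min_le_right 1 ((a - b) / (2 * (|c| + 1)))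
  set t := min 1 ((a - b) / (2 * (|c| + 1)))
  have h2 : a ≤ b + t * c := by
    have : t * a ≤ t * (b + t * c) := by linarith
    exact le_of_mul_le_mul_left this ht
  rw [le_div_iff₀ (by positivity)] at h3
  have : t * c ≤ t * |c| := mul_le_mul_of_nonneg_left (le_abs_self c) ht.le
  nlinarith

lemma prox_var {α : ℝ} (hα : 0 < α) {h : 𝓔 → EReal} (hh : ProperClosedConvex h)
    {u p : 𝓔} (hp : IsProxPt α h u p) {y : 𝓔} (hy : h y ≠ ⊤) :
    α * (h p).toReal + ⟪u - p, y - p⟫ ≤ α * (h y).toReal := by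
  have h0 := prox_ne_top hα hh hp
  apply lim_ineq (c := 1 / 2 * ‖y - p‖ ^ 2)
  intro t ht ht1
  obtain ⟨h3, h4⟩ := conv_real hh h0 hy ht.le ht1
  have h5 := prox_real hα hh hp h3
  have e : p + t • (y - p) - u = t • (y - p) - (u - p) := by abel
  rw [e, norm_sub_sq_real (t • (y - p)), norm_smul, real_inner_smul_left, real_inner_comm, norm_sub_rev p u,
    Real.norm_of_nonneg ht.le] at h5
  have h6 := mul_le_mul_of_nonneg_left h4 hα.le
  nlinarith

lemma prox_of_var {α : ℝ} (hα : 0 < α) {h : 𝓔 → EReal} (hh : ProperClosedConvex h)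
    {u p : 𝓔} (h0 : h p ≠ ⊤)
    (hp : ∀ y, h y ≠ ⊤ → α * (h p).toReal + ⟪u - p, y - p⟫ ≤ α * (h y).toReal) :
    IsProxPt α h u p := by
  apply prox_of_real hα hh h0
  intro y hy
  have h1 := hp y hy
  have e : y - u = (y - p) - (u - p) := by abel
  rw [e, norm_sub_sq_real (y - p), norm_sub_rev p u, real_inner_comm]
  nlinarith [sq_nonneg ‖y - p‖]

lemma prox_firm {α : ℝ} (hα : 0 < α) {h : 𝓔 → EReal} (hh : ProperClosedConvex h)
    {u p v q : 𝓔} (hp : IsProxPt α h u p) (hq : IsProxPt α h v q) :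
    ‖p - q‖ ^ 2 + ‖(u - v) - (p - q)‖ ^ 2 ≤ ‖u - v‖ ^ 2 := by
  have h1 := prox_var hα hh hp (prox_ne_top hα hh hq)
  have h2 := prox_var hα hh hq (prox_ne_top hα hh hp)
  have e : ⟪u - p, q - p⟫ + ⟪v - q, p - q⟫ = ‖p - q‖ ^ 2 - ⟪u - v, p - q⟫ := by
    rw [← real_inner_self_eq_norm_sq]
    simp only [inner_sub_left, inner_sub_right]
    ring
  rw [norm_sub_sq_real (u - v)]
  linarith

lemma prox_closed {α : ℝ} (hα : 0 < α) {h : 𝓔 → EReal} (hh : ProperClosedConvex h)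
    {u p : ℕ → 𝓔} {u0 p0 : 𝓔} (hp : ∀ k, IsProxPt α h (u k) (p k))
    (hu : Tendsto u atTop (nhds u0)) (hp0 : Tendsto p atTop (nhds p0)) : IsProxPt α h u0 p0 := by
  have hbot := hh.2.1
  have main : ∀ y, h y ≠ ⊤ → h p0 ≤
      (((h y).toReal + 1 / α * (1 / 2 * ‖y - u0‖ ^ 2 - 1 / 2 * ‖p0 - u0‖ ^ 2) : ℝ) : EReal) := by
    intro y hy
    by_contra hlt
    push Not at hlt
    obtain ⟨c, hc1, hc2⟩ := EReal.lt_iff_exists_real_btwn.1 hlt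
    have e1 := hp0.eventually (hh.2.2.1 p0 c hc2)
    have hl : Tendsto (fun k => (h y).toReal + 1 / α * (1 / 2 * ‖y - u k‖ ^ 2 -
        1 / 2 * ‖p k - u k‖ ^ 2)) atTop (nhds ((h y).toReal + 1 / α *
        (1 / 2 * ‖y - u0‖ ^ 2 - 1 / 2 * ‖p0 - u0‖ ^ 2))) := by
      refine Tendsto.const_add _ (Tendsto.const_mul _ (Tendsto.sub ?_ ?_))
      · exact (((tendsto_const_nhds.sub hu).norm).pow 2).const_mul _
      · exact (((hp0.sub hu).norm).pow 2).const_mul _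
    have e2 := hl.eventually (gt_mem_nhds (EReal.coe_lt_coe_iff.1 hc1))
    obtain ⟨k, hk1, hk2⟩ := (e1.and e2).exists
    have h3 := prox_real hα hh (hp k) hy
    rw [← EReal.coe_toReal (prox_ne_top hα hh (hp k)) (hbot _)] at hk1
    have hk1 := EReal.coe_lt_coe_iff.1 hk1
    have h4 : (h (p k)).toReal ≤ (h y).toReal + 1 / α * (1 / 2 * ‖y - u k‖ ^ 2 -
        1 / 2 * ‖p k - u k‖ ^ 2) := by
      have : α * (h (p k)).toReal ≤ α * ((h y).toReal + 1 / α * (1 / 2 * ‖y - u k‖ ^ 2 -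
        1 / 2 * ‖p k - u k‖ ^ 2)) := by
        rw [mul_add, ← mul_assoc, mul_one_div_cancel hα.ne']
        linarith
      exact le_of_mul_le_mul_left this hα
    linarith
  obtain ⟨y0, hy0⟩ := hh.1
  have h0 : h p0 ≠ ⊤ := by
    intro h4
    have := main y0 hy0
    rw [h4, top_le_iff] at this
    exact EReal.coe_ne_top _ this
  apply prox_of_real hα hh h0
  intro y hy
  have h1 := main y hy
  rw [← EReal.coe_toReal h0 (hbot _)] at h1
  have h2 := mul_le_mul_of_nonneg_left (EReal.coe_le_coe_iff.1 h1) hα.le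
  rw [mul_add, ← mul_assoc, mul_one_div_cancel hα.ne'] at h2
  linarith

/-! convex smooth functions -/

lemma line_deriv {f : 𝓔 → ℝ} {f' : 𝓔 → 𝓔} (hg : ∀ x, HasGradientAt f (f' x) x) (x v : 𝓔) (t : ℝ) :
    HasDerivAt (fun t : ℝ => f (x + t • v)) ⟪f' (x + t • v), v⟫ t := by
  have h1 : HasDerivAt (fun t : ℝ => x + t • v) v t := by
    simpa using ((hasDerivAt_id t).smul_const v).const_add x
  have h2 := (hg (x + t • v)).hasFDerivAt.comp_hasDerivAt t h1
  refine HasDerivAt.congr_deriv (f := fun t : ℝ => f (x + t • v)) h2 ?_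
  simp

lemma convex_grad {f : 𝓔 → ℝ} {f' : 𝓔 → 𝓔} (hg : ∀ x, HasGradientAt f (f' x) x)
    (hc : ConvexOn ℝ Set.univ f) (x y : 𝓔) : f x + ⟪f' x, y - x⟫ ≤ f y := by
  have hcv : ConvexOn ℝ Set.univ (fun t : ℝ => f (x + t • (y - x))) := by
    refine ⟨convex_univ, ?_⟩
    intro s _ t _ a b ha hb hab
    have := hc.2 (Set.mem_univ (x + s • (y - x))) (Set.mem_univ (x + t • (y - x))) ha hb hab
    have e : a • (x + s • (y - x)) + b • (x + t • (y - x)) =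
        x + (a • s + b • t) • (y - x) := by
      have : x = (a + b) • x := by rw [hab, one_smul]
      conv_rhs => lhs; rw [this]
      simp only [smul_eq_mul]
      module
    rw [e] at this
    exact this
  have h1 := hcv.le_slope_of_hasDerivAt (Set.mem_univ 0) (Set.mem_univ 1) one_pos
    (line_deriv hg x (y - x) 0)
  simp [slope] at h1
  linarith

lemma descent {f : 𝓔 → ℝ} {f' : 𝓔 → 𝓔} (hg : ∀ x, HasGradientAt f (f' x) x)
    {L : ℝ} (hlip : ∀ x y, ‖f' x - f' y‖ ≤ L * ‖x - y‖) (x v : 𝓔) :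
    f (x + v) ≤ f x + ⟪f' x, v⟫ + L / 2 * ‖v‖ ^ 2 := by
  let φ : ℝ → ℝ := fun t => f (x + t • v) - t * ⟪f' x, v⟫ - L / 2 * t ^ 2 * ‖v‖ ^ 2
  have hd : ∀ t, HasDerivAt φ (⟪f' (x + t • v), v⟫ - ⟪f' x, v⟫ - L * t * ‖v‖ ^ 2) t := by
    intro t
    have h2 : HasDerivAt (fun t : ℝ => t * ⟪f' x, v⟫) ⟪f' x, v⟫ t := by
      simpa using (hasDerivAt_id t).mul_const ⟪f' x, v⟫
    have h3 : HasDerivAt (fun t : ℝ => L / 2 * t ^ 2 * ‖v‖ ^ 2) (L * t * ‖v‖ ^ 2) t := by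
      have := ((hasDerivAt_pow 2 t).const_mul (L / 2)).mul_const (‖v‖ ^ 2)
      refine this.congr_deriv ?_
      push_cast
      ring
    exact ((line_deriv hg x v t).sub h2).sub h3
  have hanti : AntitoneOn φ (Set.Icc 0 1) := by
    apply antitoneOn_of_deriv_nonpos (convex_Icc 0 1)
    · exact fun t _ => (hd t).continuousAt.continuousWithinAt
    · exact fun t _ => (hd t).differentiableAt.differentiableWithinAt
    · intro t ht
      rw [interior_Icc] at ht
      rw [(hd t).deriv, ← inner_sub_left]
      have h1 := real_inner_le_norm (f' (x + t • v) - f' x) v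
      have h2 := hlip (x + t • v) x
      rw [add_sub_cancel_left, norm_smul, Real.norm_of_nonneg ht.1.le] at h2
      nlinarith [norm_nonneg v, mul_le_mul_of_nonneg_right h2 (norm_nonneg v)]
  have := hanti (Set.left_mem_Icc.2 zero_le_one) (Set.right_mem_Icc.2 zero_le_one) zero_le_one
  simp [φ] at this
  linarith

lemma cocoer_half {f : 𝓔 → ℝ} {f' : 𝓔 → 𝓔} (hg : ∀ x, HasGradientAt f (f' x) x)
    (hc : ConvexOn ℝ Set.univ f) {L : ℝ} (hL : 0 < L)
    (hlip : ∀ x y, ‖f' x - f' y‖ ≤ L * ‖x - y‖) (x y : 𝓔) :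
    f x + ⟪f' x, y - x⟫ + 1 / (2 * L) * ‖f' y - f' x‖ ^ 2 ≤ f y := by
  have h1 := convex_grad hg hc x (y + (-(1 / L)) • (f' y - f' x))
  have h2 := descent hg hlip y ((-(1 / L)) • (f' y - f' x))
  rw [norm_smul, mul_pow, norm_neg, Real.norm_of_nonneg (by positivity), real_inner_smul_right] at h2
  have e : y + (-(1 / L)) • (f' y - f' x) - x = (y - x) + (-(1 / L)) • (f' y - f' x) := by abel
  rw [e, inner_add_right, real_inner_smul_right] at h1
  have e2 : ⟪f' y, f' y - f' x⟫ - ⟪f' x, f' y - f' x⟫ = ‖f' y - f' x‖ ^ 2 := by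
    rw [← inner_sub_left, real_inner_self_eq_norm_sq]
  have e3 : L / 2 * ((1 / L) ^ 2 * ‖f' y - f' x‖ ^ 2) = 1 / (2 * L) * ‖f' y - f' x‖ ^ 2 := by
    field_simp
  have e4 : 1 / L * ⟪f' y, f' y - f' x⟫ - 1 / L * ⟪f' x, f' y - f' x⟫ =
     2 * (1 / (2 * L) * ‖f' y - f' x‖ ^ 2) := by
    rw [← mul_sub, e2]; field_simp
  linarith

lemma cocoer {f : 𝓔 → ℝ} {f' : 𝓔 → 𝓔} (hg : ∀ x, HasGradientAt f (f' x) x)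
    (hc : ConvexOn ℝ Set.univ f) {L : ℝ} (hL : 0 < L)
    (hlip : ∀ x y, ‖f' x - f' y‖ ≤ L * ‖x - y‖) (x y : 𝓔) :
    1 / L * ‖f' x - f' y‖ ^ 2 ≤ ⟪x - y, f' x - f' y⟫ := by
  have h1 := cocoer_half hg hc hL hlip x y
  have h2 := cocoer_half hg hc hL hlip y x
  rw [norm_sub_rev] at h1
  have e : ⟪x - y, f' x - f' y⟫ = -⟪f' x, y - x⟫ - ⟪f' y, x - y⟫ := by
    rw [real_inner_comm, inner_sub_left, ← inner_neg_right, neg_sub]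
  have e2 : 1 / L * ‖f' x - f' y‖ ^ 2 = 2 * (1 / (2 * L) * ‖f' x - f' y‖ ^ 2) := by field_simp
  linarith

lemma key_static {n : ℕ} (w : Fin n → ℝ) (i : Fin n) (hw0 : ∀ j, 0 ≤ w j) (hw1 : ∑ j, w j = 1)
    (hwi : 0 < w i) {f : 𝓔 → ℝ} {f' : 𝓔 → 𝓔} (hg : ∀ x, HasGradientAt f (f' x) x)
    (hc : ConvexOn ℝ Set.univ f) {L : ℝ} (hL : 0 < L)
    (hlip : ∀ x y, ‖f' x - f' y‖ ≤ L * ‖x - y‖) {h : 𝓔 → EReal} (hh : ProperClosedConvex h)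
    {α : ℝ} (hα : 0 < α) (hα1 : α < 2 * (w i / L)) (xs : Fin n → 𝓔)
    (hfix : IsProxPt α h ((∑ j, w j • xs j) - α • f' (xs i)) (xs i)) :
    ∃ C : ℝ, 0 < C ∧ ∀ (y : Fin n → 𝓔) (p : 𝓔),
      IsProxPt α h ((∑ j, w j • y j) - α • f' (y i)) p →
      ‖p - y i‖ ^ 2 ≤ C * (∑ j, w j * ‖y j - xs j‖ ^ 2 - ‖p - xs i‖ ^ 2) := by
  set β := α / w i with hβ
  have hβ0 : 0 < β := div_pos hα hwi
  have hβ1 : β < 2 / L := by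
    rw [hβ, div_lt_iff₀ hwi]
    calc α < 2 * (w i / L) := hα1
      _ = _ := by ring
  set c := β * (2 / L - β) with hcdef
  have hc0 : 0 < c := mul_pos hβ0 (by linarith)
  refine ⟨3 * (1 + 1 / w i + β ^ 2 / (w i * c)), by positivity, ?_⟩
  intro y p hp
  set G := f' (y i) - f' (xs i) with hG
  set e : Fin n → 𝓔 := fun j => y j - xs j with he
  set z : Fin n → 𝓔 := fun j => e j - (if j = i then β • G else 0) with hz
  set U : 𝓔 := ∑ j, w j • z j with hU
  have hUeq : ((∑ j, w j • y j) - α • f' (y i)) - ((∑ j, w j • xs j) - α • f' (xs i)) = U := by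
    have h1 : ∑ j, w j • (if j = i then β • G else 0) = α • G := by
      simp only [smul_ite, smul_zero, Finset.sum_ite_eq', Finset.mem_univ, if_true]
      rw [smul_smul, hβ, mul_div_cancel₀ _ hwi.ne']
    simp only [hU, hz, smul_sub, Finset.sum_sub_distrib]
    rw [h1, hG, he]
    simp only [smul_sub, Finset.sum_sub_distrib]
    abel
  have hfirm := prox_firm hα hh hp hfix
  rw [hUeq] at hfirm
  have hvar : ∑ j, w j * ‖z j - U‖ ^ 2 = ∑ j, w j * ‖z j‖ ^ 2 - ‖U‖ ^ 2 := by
    have h1 : ∀ j, w j * ‖z j - U‖ ^ 2 = w j * ‖z j‖ ^ 2 - 2 * ⟪w j • z j, U⟫ + w j * ‖U‖ ^ 2 := by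
      intro j
      rw [norm_sub_sq_real, real_inner_smul_left]; ring
    simp only [h1, Finset.sum_add_distrib, Finset.sum_sub_distrib]
    rw [← Finset.mul_sum, ← sum_inner, ← Finset.sum_mul, hw1, ← hU, real_inner_self_eq_norm_sq]
    ring
  have hone : w i * ‖z i - U‖ ^ 2 ≤ ∑ j, w j * ‖z j - U‖ ^ 2 :=
    Finset.single_le_sum (f := fun j => w j * ‖z j - U‖ ^ 2)
      (fun j _ => mul_nonneg (hw0 j) (sq_nonneg _)) (Finset.mem_univ i)
  have hzi : ‖z i‖ ^ 2 ≤ ‖e i‖ ^ 2 - c * ‖G‖ ^ 2 := by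
    have h1 := cocoer hg hc hL hlip (y i) (xs i)
    have : z i = e i - β • G := by simp [hz]
    rw [this, norm_sub_sq_real, real_inner_smul_right, norm_smul, mul_pow,
      Real.norm_of_nonneg hβ0.le]
    have h2 := mul_le_mul_of_nonneg_left h1 hβ0.le
    have h3 : c * ‖G‖ ^ 2 = 2 * (β * (1 / L * ‖G‖ ^ 2)) - β ^ 2 * ‖G‖ ^ 2 := by
      rw [hcdef]; ring
    rw [h3]
    linarith
  have hsum : ∑ j, w j * ‖z j‖ ^ 2 ≤ ∑ j, w j * ‖e j‖ ^ 2 - w i * (c * ‖G‖ ^ 2) := by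
    have h1 : ∑ j, (if j = i then w i * (c * ‖G‖ ^ 2) else 0) = w i * (c * ‖G‖ ^ 2) := by simp
    rw [← h1, ← Finset.sum_sub_distrib]
    apply Finset.sum_le_sum
    intro j _
    by_cases hj : j = i
    · subst hj
      simp only [if_true]
      have := mul_le_mul_of_nonneg_left hzi hwi.le
      linarith
    · simp [hz, hj]
  set r := ∑ j, w j * ‖e j‖ ^ 2 - ‖p - xs i‖ ^ 2 with hr
  have htot : ‖U - (p - xs i)‖ ^ 2 + w i * ‖z i - U‖ ^ 2 + w i * (c * ‖G‖ ^ 2) ≤ r := by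
    linarith
  have hX := sq_nonneg ‖U - (p - xs i)‖
  have hY : 0 ≤ w i * ‖z i - U‖ ^ 2 := by positivity
  have hZ : 0 ≤ w i * (c * ‖G‖ ^ 2) := by positivity
  have hX1 : ‖U - (p - xs i)‖ ^ 2 ≤ r := by linarith
  have hY1 : ‖z i - U‖ ^ 2 ≤ 1 / w i * r := by
    rw [one_div_mul_eq_div, le_div_iff₀ hwi]; linarith
  have hZ1 : (β * ‖G‖) ^ 2 ≤ β ^ 2 / (w i * c) * r := by
    rw [mul_pow, div_mul_eq_mul_div, mul_div_assoc]
    refine mul_le_mul_of_nonneg_left ?_ (by positivity)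
    rw [le_div_iff₀ (by positivity)]; linarith
  have hdec : p - y i = -(U - (p - xs i)) - (z i - U) - β • G := by
    simp only [hz, he, if_true]; abel
  have hn : ‖p - y i‖ ≤ ‖U - (p - xs i)‖ + ‖z i - U‖ + β * ‖G‖ := by
    rw [hdec]
    refine (norm_sub_le _ _).trans ?_
    rw [norm_smul, Real.norm_of_nonneg hβ0.le]
    gcongr
    refine (norm_sub_le _ _).trans ?_
    rw [norm_neg]
  have hn2 : ‖p - y i‖ ^ 2 ≤ 3 * (‖U - (p - xs i)‖ ^ 2 + ‖z i - U‖ ^ 2 + (β * ‖G‖) ^ 2) := by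
    have := pow_le_pow_left₀ (norm_nonneg _) hn 2
    nlinarith [sq_nonneg (‖U - (p - xs i)‖ - ‖z i - U‖), sq_nonneg (‖z i - U‖ - β * ‖G‖),
      sq_nonneg (‖U - (p - xs i)‖ - β * ‖G‖)]
  calc _ ≤ _ := hn2
    _ ≤ 3 * (r + 1 / w i * r + β ^ 2 / (w i * c) * r) := by gcongr
    _ = _ := by ring

/-! asynchronous averaging -/

lemma async_avg {n : ℕ} (hn : 0 < n) (W : Fin n → Fin n → ℝ)
    (hWsymm : ∀ i j, W i j = W j i)
    (hWnonneg : ∀ i j, 0 ≤ W i j)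
    (hWstoch : ∀ i, ∑ j, W i j = 1)
    (hWdiag : ∀ i, 0 < W i i)
    (hconn : (SimpleGraph.fromRel fun i j : Fin n => 0 < W i j).Connected)
    (a : ℕ → Fin n → ℝ) (ha : ∀ k i, 0 ≤ a k i)
    (K : Fin n → Set ℕ) (s : Fin n → Fin n → ℕ → ℕ)
    (hs_le : ∀ i j k, s i j k ≤ k) (hs_self : ∀ i k, s i i k = k)
    (hupd : ∀ i k, k ∈ K i → a (k + 1) i ≤ ∑ j, W i j * a (s i j k) j)
    (hkeep : ∀ i k, k ∉ K i → a (k + 1) i = a k i)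
    (B D : ℕ) (hB : ∀ i k, ∃ l, k ≤ l ∧ l ≤ k + B ∧ l ∈ K i)
    (hD : ∀ i j k, k ∈ K i → k - D ≤ s i j k) :
    ∃ M : ℝ, (∃ b, ∀ k i, a k i ≤ b) ∧ ∀ i, Tendsto (fun k => a k i) atTop (nhds M) := by
  have hne : Nonempty (Fin n) := ⟨⟨0, hn⟩⟩
  have avg : ∀ i k v, (∀ j, a (s i j k) j ≤ v) → ∑ j, W i j * a (s i j k) j ≤ v := by
    intro i k v hv
    calc _ ≤ ∑ j, W i j * v := Finset.sum_le_sum fun j _ =>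
          mul_le_mul_of_nonneg_left (hv j) (hWnonneg i j)
      _ = v := by rw [← Finset.sum_mul, hWstoch, one_mul]
  -- boundedness
  obtain ⟨b, hb0⟩ : ∃ b, ∀ i, a 0 i ≤ b := by
    obtain ⟨b, hb⟩ := (Set.finite_range (a 0)).bddAbove
    exact ⟨b, fun i => hb ⟨i, rfl⟩⟩
  have hb : ∀ k i, a k i ≤ b := by
    intro k
    induction k using Nat.strong_induction_on with
    | _ k ih =>
      intro i
      rcases k with _ | k
      · exact hb0 i
      · by_cases hk : k ∈ K i
        · refine (hupd i k hk).trans (avg i k b fun j => ih _ ?_ j)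
          have := hs_le i j k
          omega
        · rw [hkeep i k hk]; exact ih k (by omega) i
  -- window
  have hwin : ∀ k v, (∀ t, k ≤ t → t ≤ k + D → ∀ i, a t i ≤ v) → ∀ t, k ≤ t → ∀ i, a t i ≤ v := by
    intro k v hv t
    induction t using Nat.strong_induction_on with
    | _ t ih =>
      intro hkt i
      by_cases htD : t ≤ k + D
      · exact hv t hkt htD i
      · obtain ⟨t, rfl⟩ : ∃ u, t = u + 1 := ⟨t - 1, by omega⟩
        by_cases hk : t ∈ K i
        · refine (hupd i t hk).trans (avg i t v fun j => ih _ ?_ ?_ j)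
          · have := hs_le i j t
            omega
          · have := hD i j t hk
            omega
        · rw [hkeep i t hk]; exact ih t (by omega) (by omega) i
  -- the limit value
  let S : Set ℝ := {v | ∃ k0, ∀ k, k0 ≤ k → ∀ i, a k i ≤ v}
  have hSne : S.Nonempty := ⟨b, 0, fun k _ i => hb k i⟩
  have hSbd : BddBelow S := by
    refine ⟨0, ?_⟩
    rintro v ⟨k0, hv⟩
    exact (ha k0 ⟨0, hn⟩).trans (hv k0 le_rfl _)
  set M := sInf S with hM
  have hup : ∀ ε > 0, ∃ k0, ∀ k, k0 ≤ k → ∀ i, a k i ≤ M + ε := by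
    intro ε hε
    obtain ⟨v, ⟨k0, hv⟩, hlt⟩ := exists_lt_of_csInf_lt hSne (show sInf S < M + ε by linarith)
    exact ⟨k0, fun k hk i => (hv k hk i).trans hlt.le⟩
  -- a lower bound on the positive weights
  obtain ⟨η, hη0, hη1, hη⟩ : ∃ η : ℝ, 0 < η ∧ η ≤ 1 ∧ ∀ i j, 0 < W i j → η ≤ W i j := by
    let F : Fin n × Fin n → ℝ := fun q => if 0 < W q.1 q.2 then W q.1 q.2 else 1
    obtain ⟨q, hq⟩ := Finite.exists_min F
    have hFpos : ∀ q, 0 < F q := by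
      intro q
      simp only [F]; split_ifs with h1
      · exact h1
      · exact one_pos
    refine ⟨min 1 (F q), lt_min one_pos (hFpos q), min_le_left _ _, ?_⟩
    intro i j hij
    refine (min_le_right _ _).trans ?_
    have := hq (i, j)
    simpa [F, hij] using this
  -- propagation
  have hprop : ∀ i j, ∃ T : ℕ, ∀ k v, (∀ t, k - D ≤ t → ∀ m, a t m ≤ v) →
      ∀ t, k + T ≤ t → η ^ (t - k) * (v - a k i) ≤ v - a t j := by
    intro i j
    -- lower bounds persist
    have pull : ∀ k v, (∀ t, k - D ≤ t → ∀ m, a t m ≤ v) → ∀ l, k ≤ l → ∀ m, l ∈ K m → ∀ j,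
        W m j * (v - a (s m j l) j) ≤ v - a (l + 1) m := by
      intro k v hv l hl m hlm j
      have h1 := hupd m l hlm
      have h2 : v - ∑ j, W m j * a (s m j l) j = ∑ j, W m j * (v - a (s m j l) j) := by
        simp only [mul_sub, Finset.sum_sub_distrib]
        rw [← Finset.sum_mul, hWstoch, one_mul]
      have h3 : W m j * (v - a (s m j l) j) ≤ ∑ j, W m j * (v - a (s m j l) j) := by
        apply Finset.single_le_sum (f := fun j => W m j * (v - a (s m j l) j)) _ (Finset.mem_univ j)
        intro j' _
        apply mul_nonneg (hWnonneg _ _)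
        have := hv (s m j' l) (by have := hD m j' l hlm; omega) j'
        linarith
      linarith
    have persist : ∀ k v, (∀ t, k - D ≤ t → ∀ m, a t m ≤ v) → ∀ m t0, k ≤ t0 →
        η ^ (t0 - k) * (v - a k i) ≤ v - a t0 m →
        ∀ t, t0 ≤ t → η ^ (t - k) * (v - a k i) ≤ v - a t m := by
      intro k v hv m t0 hkt0 h0 t ht
      induction t, ht using Nat.le_induction with
      | base => exact h0
      | succ t ht ih =>
        have hnn : 0 ≤ v - a t m := by have := hv t (by omega) m; linarith
        have hstep : η * (v - a t m) ≤ v - a (t + 1) m := by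
          by_cases hk : t ∈ K m
          · have := pull k v hv t (by omega) m hk m
            rw [hs_self] at this
            exact (mul_le_mul_of_nonneg_right (hη m m (hWdiag m)) hnn).trans this
          · rw [hkeep m t hk]
            nlinarith
        have e : t + 1 - k = (t - k) + 1 := by omega
        rw [e, pow_succ]
        calc _ = η * (η ^ (t - k) * (v - a k i)) := by ring
          _ ≤ η * (v - a t m) := mul_le_mul_of_nonneg_left ih hη0.le
          _ ≤ _ := hstep
    obtain ⟨p⟩ := hconn.preconnected j i
    induction p with
    | nil =>
      refine ⟨0, fun k v hv t ht => persist k v hv _ k le_rfl ?_ t (by omega)⟩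
      simp
    | @cons m j i' hadj p ih =>
      obtain ⟨T, hT⟩ := ih persist
      have hmj : 0 < W m j := by
        rw [SimpleGraph.fromRel_adj] at hadj
        rcases hadj.2 with h1 | h1
        · exact h1
        · rw [hWsymm]; exact h1
      refine ⟨T + D + B + 1, fun k v hv t ht => ?_⟩
      obtain ⟨l, hl1, hl2, hlK⟩ := hB m (k + T + D)
      refine persist k v hv m (l + 1) (by omega) ?_ t (by omega)
      have h1 := pull k v hv l (by omega) m hlK j
      have hs1 := hD m j l hlK
      have hs2 := hs_le m j l
      have h2 := hT k v hv (s m j l) (by omega)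
      have hnn : 0 ≤ v - a (s m j l) j := by have := hv (s m j l) (by omega) j; linarith
      have hnk : 0 ≤ v - a k i' := by have := hv k (by omega) i'; linarith
      calc η ^ (l + 1 - k) * (v - a k i') ≤ η ^ (s m j l - k + 1) * (v - a k i') := by
            refine mul_le_mul_of_nonneg_right ?_ hnk
            exact pow_le_pow_of_le_one hη0.le hη1 (by omega)
        _ = η * (η ^ (s m j l - k) * (v - a k i')) := by rw [pow_succ]; ring
        _ ≤ η * (v - a (s m j l) j) := mul_le_mul_of_nonneg_left h2 hη0.le
        _ ≤ W m j * (v - a (s m j l) j) := mul_le_mul_of_nonneg_right (hη m j hmj) hnn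
        _ ≤ _ := h1
  refine ⟨M, ⟨b, hb⟩, ?_⟩
  intro i
  choose T hT using hprop i
  obtain ⟨T0, hT0⟩ : ∃ T0, ∀ j, T j ≤ T0 := by
    obtain ⟨b, hb⟩ := (Set.finite_range T).bddAbove
    exact ⟨b, fun i => hb ⟨i, rfl⟩⟩
  rw [Metric.tendsto_atTop]
  intro δ hδ
  set q := η ^ (T0 + D) with hq
  have hq0 : 0 < q := pow_pos hη0 _
  have hq1 : q ≤ 1 := pow_le_one₀ hη0.le hη1
  set ε := q * δ / 2 with hε
  have hε0 : 0 < ε := by positivity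
  have hεδ : ε < δ := by nlinarith
  obtain ⟨k0, hk0⟩ := hup ε hε0
  refine ⟨k0 + D, fun k hk => ?_⟩
  rw [Real.dist_eq, abs_lt]
  have hkup := hk0 k (by omega) i
  refine ⟨?_, by linarith⟩
  by_contra hcon
  push Not at hcon
  have hv : ∀ t, k - D ≤ t → ∀ m, a t m ≤ M + ε := fun t ht m => hk0 t (by omega) m
  have hS : M + ε - q * δ ∈ S := by
    refine ⟨k + T0, hwin _ _ ?_⟩
    intro t ht1 ht2 j
    have h1 := hT j k (M + ε) hv t (by have := hT0 j; omega)
    have h2 : q ≤ η ^ (t - k) := pow_le_pow_of_le_one hη0.le hη1 (by omega)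
    have h3 : q * δ ≤ η ^ (t - k) * (M + ε - a k i) :=
      mul_le_mul h2 (by linarith) hδ.le (by positivity)
    linarith
  have := csInf_le hSbd hS
  rw [← hM] at this
  have : 0 < q * δ := by positivity
  linarith

lemma sum_ne_bot {n : ℕ} (g : Fin n → EReal) (hg : ∀ i, g i ≠ ⊥) (S : Finset (Fin n)) :
    ∑ i ∈ S, g i ≠ ⊥ := by
  induction S using Finset.induction_on with
  | empty => simp
  | insert a S ha ih =>
    rw [Finset.sum_insert ha]
    rw [Ne, EReal.add_eq_bot_iff]
    push Not
    exact ⟨hg a, ih⟩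

lemma opt_fixed {n : ℕ} (W : Fin n → Fin n → ℝ)
    (hWsymm : ∀ i j, W i j = W j i)
    (f : Fin n → 𝓔 → ℝ) (f' : Fin n → 𝓔 → 𝓔)
    (hgrad : ∀ i x, HasGradientAt (f i) (f' i x) x)
    (L : Fin n → ℝ) 
    (hlip : ∀ i x y, ‖f' i x - f' i y‖ ≤ L i * ‖x - y‖)
    (h : Fin n → 𝓔 → EReal)
    (hh : ∀ i, ProperClosedConvex (h i))
    (α : ℝ) (hα0 : 0 < α) (xo : Fin n → 𝓔)
    (hopt : ∀ x : Fin n → 𝓔,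
        (∑ i, (((f i (xo i) : ℝ) : EReal) + h i (xo i)))
            + ((1 / (2 * α) * ∑ i, ⟪xo i, xo i - (∑ j, W i j • xo j)⟫ : ℝ) : EReal)
          ≤ (∑ i, (((f i (x i) : ℝ) : EReal) + h i (x i)))
            + ((1 / (2 * α) * ∑ i, ⟪x i, x i - (∑ j, W i j • x j)⟫ : ℝ) : EReal)) :
    ∀ i, IsProxPt α (h i) ((∑ j, W i j • xo j) - α • f' i (xo i)) (xo i) := by
  have hbot : ∀ i y, h i y ≠ ⊥ := fun i => (hh i).2.1
  have hfin : ∀ x : Fin n → 𝓔, (∀ i, h i (x i) ≠ ⊤) →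
      ∑ i, (((f i (x i) : ℝ) : EReal) + h i (x i)) =
        ((∑ i, (f i (x i) + (h i (x i)).toReal) : ℝ) : EReal) := by
    intro x hx
    have hcs : ∀ g : Fin n → ℝ, ((∑ i, g i : ℝ) : EReal) = ∑ i, (g i : EReal) := fun g =>
      map_sum (⟨⟨fun r : ℝ => (r : EReal), EReal.coe_zero⟩, EReal.coe_add⟩ : ℝ →+ EReal) g _
    rw [hcs]
    refine Finset.sum_congr rfl fun i _ => ?_
    rw [EReal.coe_add, EReal.coe_toReal (hx i) (hbot i _)]
  have hxo : ∀ i, h i (xo i) ≠ ⊤ := by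
    intro i htop
    choose x0 hx0 using fun i => (hh i).1
    have h1 := hopt x0
    rw [hfin x0 hx0, ← Finset.add_sum_erase _ _ (Finset.mem_univ i), htop, EReal.coe_add_top,
      EReal.top_add_of_ne_bot, EReal.top_add_coe, ← EReal.coe_add, top_le_iff] at h1
    · exact EReal.coe_ne_top _ h1
    · apply sum_ne_bot
      intro j
      rw [Ne, EReal.add_eq_bot_iff]
      push Not
      exact ⟨EReal.coe_ne_bot _, hbot j _⟩
  intro i
  apply prox_of_var hα0 (hh i) (hxo i)
  intro y hy
  set v := y - xo i with hv
  set Nn : 𝓔 := xo i - ∑ j, W i j • xo j with hNn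
  have hmain : α * (h i (xo i)).toReal ≤ α * (h i y).toReal + α * ⟪f' i (xo i), v⟫ + ⟪v, Nn⟫ := by
    apply lim_ineq (c := α * (L i / 2 * ‖v‖ ^ 2) + 1 / 2 * ((1 - W i i) * ‖v‖ ^ 2))
    intro t ht ht1
    obtain ⟨h3, h4⟩ := conv_real (hh i) (hxo i) hy ht.le ht1
    rw [← hv] at h3 h4
    set δ : Fin n → 𝓔 := fun j => if j = i then t • v else 0 with hδ
    have hx : ∀ j, h j (xo j + δ j) ≠ ⊤ := by
      intro j
      by_cases hj : j = i
      · subst hj; simpa [hδ] using h3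
      · simpa [hδ, hj] using hxo j
    have h1 := hopt (fun j => xo j + δ j)
    rw [hfin xo hxo, hfin _ hx, ← EReal.coe_add, ← EReal.coe_add, EReal.coe_le_coe_iff] at h1
    have hF : ∑ j, (f j (xo j + δ j) + (h j (xo j + δ j)).toReal) =
        ∑ j, (f j (xo j) + (h j (xo j)).toReal) + ((f i (xo i + t • v) +
          (h i (xo i + t • v)).toReal) - (f i (xo i) + (h i (xo i)).toReal)) := by
      rw [← sub_eq_iff_eq_add', ← Finset.sum_sub_distrib, Finset.sum_eq_single i]
      · simp [hδ]
      · intro j _ hj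
        simp [hδ, hj]
      · simp
    have hQ : ∑ k, ⟪xo k + δ k, xo k + δ k - ∑ j, W k j • (xo j + δ j)⟫ =
        ∑ k, ⟪xo k, xo k - ∑ j, W k j • xo j⟫ + (2 * ⟪t • v, Nn⟫ + (1 - W i i) * ‖t • v‖ ^ 2) := by
      have hsm : ∀ k, ∑ j, W k j • (xo j + δ j) = ∑ j, W k j • xo j + W k i • (t • v) := by
        intro k
        simp only [smul_add, Finset.sum_add_distrib]
        congr 1
        simp [hδ]
      have e1 : ∀ k, ⟪xo k + δ k, xo k + δ k - ∑ j, W k j • (xo j + δ j)⟫ =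
          ⟪xo k, xo k - ∑ j, W k j • xo j⟫ + ⟪δ k, xo k⟫ - ⟪t • v, W i k • xo k⟫
          + ⟪δ k, xo k - ∑ j, W k j • xo j⟫ + ⟪δ k, δ k⟫ - W k i * ⟪δ k, t • v⟫ := by
        intro k
        rw [hsm]
        simp only [inner_add_left, inner_add_right, inner_sub_right, real_inner_smul_right,
          real_inner_smul_left]
        rw [real_inner_comm (xo k) (δ k), real_inner_comm (xo k) v, hWsymm k i]
        ring
      have s1 : ∀ g : Fin n → 𝓔, ∑ k, ⟪δ k, g k⟫ = ⟪t • v, g i⟫ := by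
        intro g
        rw [Finset.sum_eq_single i]
        · simp [hδ]
        · intro j _ hj; simp [hδ, hj]
        · simp
      have s2 : ∑ k, W k i * ⟪δ k, t • v⟫ = W i i * ⟪t • v, t • v⟫ := by
        rw [Finset.sum_eq_single i]
        · simp [hδ]
        · intro j _ hj; simp [hδ, hj]
        · simp
      have s3 : δ i = t • v := by simp [hδ]
      simp only [e1, Finset.sum_add_distrib, Finset.sum_sub_distrib]
      rw [s1, s1, s1, s2, ← inner_sum, s3, real_inner_self_eq_norm_sq, hNn, inner_sub_right]
      ring
    rw [hF, hQ] at h1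
    have h5 := descent (hgrad i) (hlip i) (xo i) (t • v)
    rw [norm_smul, Real.norm_of_nonneg ht.le, real_inner_smul_right] at h5
    rw [norm_smul, Real.norm_of_nonneg ht.le, real_inner_smul_left, mul_add (1 / (2 * α))] at h1
    have h6 : 0 ≤ t * ((h i y).toReal - (h i (xo i)).toReal) + (t * ⟪f' i (xo i), v⟫
        + L i / 2 * (t * ‖v‖) ^ 2) +
        1 / (2 * α) * (2 * (t * ⟪v, Nn⟫) + (1 - W i i) * (t * ‖v‖) ^ 2) := by
      linarith
    have h7 := mul_nonneg hα0.le h6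
    have h8 : α * (t * ((h i y).toReal - (h i (xo i)).toReal) + (t * ⟪f' i (xo i), v⟫
        + L i / 2 * (t * ‖v‖) ^ 2) +
        1 / (2 * α) * (2 * (t * ⟪v, Nn⟫) + (1 - W i i) * (t * ‖v‖) ^ 2)) =
        α * (t * ((h i y).toReal - (h i (xo i)).toReal) + (t * ⟪f' i (xo i), v⟫
        + L i / 2 * (t * ‖v‖) ^ 2)) +
        1 / 2 * (2 * (t * ⟪v, Nn⟫) + (1 - W i i) * (t * ‖v‖) ^ 2) := by
      field_simp
    rw [h8] at h7
    linarith
  have e : (∑ j, W i j • xo j) - α • f' i (xo i) - xo i = -(Nn + α • f' i (xo i)) := by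
    rw [hNn]; abel
  rw [e, inner_neg_left, inner_add_left, real_inner_smul_left, real_inner_comm]
  linarith

lemma small_gap {y : ℕ → 𝓔} (hy : Tendsto (fun k => ‖y (k + 1) - y k‖) atTop (nhds 0)) (C : ℕ)
    {l m : ℕ → ℕ} (hm : Tendsto m atTop atTop) (h1 : ∀ᶠ k in atTop, m k ≤ l k)
    (h2 : ∀ᶠ k in atTop, l k ≤ m k + C) :
    Tendsto (fun k => y (l k) - y (m k)) atTop (nhds 0) := by
  rw [Metric.tendsto_atTop]
  intro ε hε
  rw [Metric.tendsto_atTop] at hy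
  obtain ⟨N, hN⟩ := hy (ε / (C + 1)) (by positivity)
  have hc : ∀ p, N ≤ p → ∀ c : ℕ, ‖y (p + c) - y p‖ ≤ c * (ε / (C + 1)) := by
    intro p hp c
    induction c with
    | zero => simp
    | succ c ih =>
      have h3 := hN (p + c) (by omega)
      simp only [dist_zero_right, norm_norm] at h3
      have h4 := norm_sub_le_norm_sub_add_norm_sub (y (p + c + 1)) (y (p + c)) (y p)
      rw [← add_assoc]
      push_cast
      linarith
  have hm' := hm.eventually_ge_atTop N
  obtain ⟨K0, hK0⟩ := eventually_atTop.1 ((h1.and h2).and hm')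
  refine ⟨K0, fun k hk => ?_⟩
  obtain ⟨⟨a1, a2⟩, a3⟩ := hK0 k hk
  have h5 := hc (m k) a3 (l k - m k)
  rw [Nat.add_sub_cancel' a1] at h5
  rw [dist_zero_right]
  refine h5.trans_lt ?_
  have h6 : ((l k - m k : ℕ) : ℝ) ≤ C := by exact_mod_cast (by omega : l k - m k ≤ C)
  calc _ ≤ (C : ℝ) * (ε / (C + 1)) := by gcongr
    _ < ((C : ℝ) + 1) * (ε / (C + 1)) := by
        have : 0 < ε / ((C : ℝ) + 1) := by positivity
        nlinarith
    _ = ε := by field_simp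

end helpers

/-- **Theorem 2, asymptotic convergence under partial asynchrony.**
For convex smooth `fᵢ`, proper closed convex `hᵢ`, the delay-free step-size condition,
a nonempty optimal set of the penalized problem, partial asynchrony with constants
`B, D`, and a connected communication graph, the asynchronous Prox-DGD iterates
converge to a fixed point of synchronous Prox-DGD. -/
theorem stmt12 (n d : ℕ) (hn : 0 < n)
    (W : Fin n → Fin n → ℝ)
    (hWsymm : ∀ i j, W i j = W j i)
    (hWnonneg : ∀ i j, 0 ≤ W i j)
    (hWstoch : ∀ i, ∑ j, W i j = 1)
    (hWdiag : ∀ i, 0 < W i i)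
    (hconn : (SimpleGraph.fromRel fun i j : Fin n => 0 < W i j).Connected)
    (f : Fin n → EuclideanSpace ℝ (Fin d) → ℝ)
    (f' : Fin n → EuclideanSpace ℝ (Fin d) → EuclideanSpace ℝ (Fin d))
    (hgrad : ∀ i x, HasGradientAt (f i) (f' i x) x)
    (hfconv : ∀ i, ConvexOn ℝ Set.univ (f i))
    (L : Fin n → ℝ) (hL : ∀ i, 0 < L i)
    (hlip : ∀ i x y, ‖f' i x - f' i y‖ ≤ L i * ‖x - y‖)
    (h : Fin n → EuclideanSpace ℝ (Fin d) → EReal)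
    (hh : ∀ i, ProperClosedConvex (h i))
    (α : ℝ) (hα0 : 0 < α) (hα1 : ∀ i, α < 2 * (W i i / L i))
    -- the penalized problem has an optimal solution
    (hpen : ∃ xopt : Fin n → EuclideanSpace ℝ (Fin d),
      ∀ x : Fin n → EuclideanSpace ℝ (Fin d),
        (∑ i, (((f i (xopt i) : ℝ) : EReal) + h i (xopt i)))
            + ((1 / (2 * α) * ∑ i, ⟪xopt i, xopt i - (∑ j, W i j • xopt j)⟫ : ℝ) : EReal)
          ≤ (∑ i, (((f i (x i) : ℝ) : EReal) + h i (x i)))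
            + ((1 / (2 * α) * ∑ i, ⟪x i, x i - (∑ j, W i j • x j)⟫ : ℝ) : EReal))
    -- the asynchronous iterates, activation sets, and delayed indices
    (x : ℕ → Fin n → EuclideanSpace ℝ (Fin d))
    (K : Fin n → Set ℕ)
    (s : Fin n → Fin n → ℕ → ℕ)
    (hs_le : ∀ i j k, s i j k ≤ k)
    (hs_self : ∀ i k, s i i k = k)
    -- the asynchronous Prox-DGD recursion
    (hupd : ∀ i k, k ∈ K i →
      IsProxPt α (h i) ((∑ j, W i j • x (s i j k) j) - α • f' i (x k i)) (x (k + 1) i))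
    (hkeep : ∀ i k, k ∉ K i → x (k + 1) i = x k i)
    -- partial asynchrony with constants B and D
    (B D : ℕ)
    (hB : ∀ i k, ∃ l, k ≤ l ∧ l ≤ k + B ∧ l ∈ K i)
    (hD : ∀ i j k, k ∈ K i → k - D ≤ s i j k) :
    ∃ xstar : Fin n → EuclideanSpace ℝ (Fin d),
      (∀ i, IsProxPt α (h i) ((∑ j, W i j • xstar j) - α • f' i (xstar i)) (xstar i)) ∧
      Tendsto x atTop (nhds xstar) := by
  -- convergence of distances to any fixed point
  have hdist : ∀ xs : Fin n → EuclideanSpace ℝ (Fin d),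
      (∀ i, IsProxPt α (h i) ((∑ j, W i j • xs j) - α • f' i (xs i)) (xs i)) →
      ∃ M : ℝ, (∃ b, ∀ k i, ‖x k i - xs i‖ ^ 2 ≤ b) ∧
        (∀ i, Tendsto (fun k => ‖x k i - xs i‖ ^ 2) atTop (nhds M)) ∧
        ∀ i, Tendsto (fun k => ‖x (k + 1) i - x k i‖) atTop (nhds 0) := by
    intro xs hfix
    have hkey : ∀ i, ∃ C : ℝ, 0 < C ∧ ∀ k, k ∈ K i → ‖x (k + 1) i - x k i‖ ^ 2 ≤
        C * (∑ j, W i j * ‖x (s i j k) j - xs j‖ ^ 2 - ‖x (k + 1) i - xs i‖ ^ 2) := by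
      intro i
      obtain ⟨C, hC0, hC⟩ := key_static (W i) i (hWnonneg i) (hWstoch i) (hWdiag i) (hgrad i)
        (hfconv i) (hL i) (hlip i) (hh i) hα0 (hα1 i) xs (hfix i)
      refine ⟨C, hC0, fun k hk => ?_⟩
      have h1 := hC (fun j => x (s i j k) j) (x (k + 1) i)
      simp only [hs_self] at h1
      exact h1 (hupd i k hk)
    choose C hC0 hC using hkey
    obtain ⟨M, hb, hM⟩ := async_avg hn W hWsymm hWnonneg hWstoch hWdiag hconn
      (fun k i => ‖x k i - xs i‖ ^ 2) (fun _ _ => sq_nonneg _) K s hs_le hs_self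
      (by
        intro i k hk
        have h1 := hC i k hk
        have h2 : 0 ≤ C i * (∑ j, W i j * ‖x (s i j k) j - xs j‖ ^ 2 - ‖x (k + 1) i - xs i‖ ^ 2) :=
          (sq_nonneg _).trans h1
        have := nonneg_of_mul_nonneg_right h2 (hC0 i)
        linarith)
      (by intro i k hk; simp only [hkeep i k hk]) B D hB hD
    refine ⟨M, hb, hM, fun i => ?_⟩
    have hall : ∀ ε > 0, ∃ N, ∀ k, N ≤ k → ∀ j, |‖x k j - xs j‖ ^ 2 - M| < ε := by
      intro ε hε
      have h1 : ∀ᶠ k in atTop, ∀ j, |‖x k j - xs j‖ ^ 2 - M| < ε := by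
        rw [eventually_all]
        intro j
        have := (Metric.tendsto_nhds.1 (hM j)) ε hε
        simpa [Real.dist_eq] using this
      exact eventually_atTop.1 h1
    rw [Metric.tendsto_atTop]
    intro ε hε
    obtain ⟨N, hN⟩ := hall (ε ^ 2 / (4 * C i)) (by have := hC0 i; positivity)
    refine ⟨N + D, fun k hk => ?_⟩
    rw [dist_zero_right, norm_norm]
    by_cases hkK : k ∈ K i
    · have h1 := hC i k hkK
      have h2 : ∑ j, W i j * ‖x (s i j k) j - xs j‖ ^ 2 ≤ M + ε ^ 2 / (4 * C i) := by
        calc _ ≤ ∑ j, W i j * (M + ε ^ 2 / (4 * C i)) := by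
              refine Finset.sum_le_sum fun j _ => mul_le_mul_of_nonneg_left ?_ (hWnonneg i j)
              have h3 := hN (s i j k) (by have := hD i j k hkK; omega) j
              linarith [(abs_lt.1 h3).2]
          _ = _ := by rw [← Finset.sum_mul, hWstoch, one_mul]
      have h4 := (abs_lt.1 (hN (k + 1) (by omega) i)).1
      have h5 : C i * (∑ j, W i j * ‖x (s i j k) j - xs j‖ ^ 2 - ‖x (k + 1) i - xs i‖ ^ 2) ≤
          C i * (2 * (ε ^ 2 / (4 * C i))) := mul_le_mul_of_nonneg_left (by linarith) (hC0 i).le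
      have h6 : C i * (2 * (ε ^ 2 / (4 * C i))) = ε ^ 2 / 2 := by
        have := (hC0 i).ne'
        field_simp
        norm_num
      have h7 : ‖x (k + 1) i - x k i‖ ^ 2 < ε ^ 2 := by
        have : 0 < ε ^ 2 := by positivity
        linarith
      exact lt_of_pow_lt_pow_left₀ 2 hε.le h7
    · rw [hkeep i k hkK]; simpa using hε
  obtain ⟨xo, hxo⟩ := hpen
  have hfo := opt_fixed W hWsymm f f' hgrad L hlip h hh α hα0 xo hxo
  obtain ⟨M0, ⟨b, hb⟩, -, hstep⟩ := hdist xo hfo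
  -- a limit point
  have hbdd : ∀ k, x k ∈ Metric.closedBall xo (Real.sqrt b) := by
    intro k
    rw [Metric.mem_closedBall, dist_pi_le_iff (Real.sqrt_nonneg _)]
    intro i
    rw [dist_eq_norm]
    exact Real.le_sqrt_of_sq_le (hb k i)
  obtain ⟨xbar, -, φ, hφ, hlim⟩ :=
    (isCompact_closedBall xo (Real.sqrt b)).tendsto_subseq hbdd
  have hlimi : ∀ i, Tendsto (fun k => x (φ k) i) atTop (nhds (xbar i)) :=
    fun i => (tendsto_pi_nhds.1 hlim) i
  have hφt := hφ.tendsto_atTop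
  have hmt : Tendsto (fun k => φ k - D) atTop atTop := by
    exact (tendsto_sub_atTop_nat D).comp hφt
  have hnear : ∀ j (l : ℕ → ℕ), (∀ᶠ k in atTop, φ k - D ≤ l k) →
      (∀ᶠ k in atTop, l k ≤ φ k - D + (D + B + 1)) →
      Tendsto (fun k => x (l k) j) atTop (nhds (xbar j)) := by
    intro j l h1 h2
    have g1 := small_gap (y := fun k => x k j) (hstep j) (D + B + 1) hmt h1 h2
    have g2 := small_gap (y := fun k => x k j) (hstep j) (D + B + 1) (l := φ) hmt
      (Eventually.of_forall fun k => by omega)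
      (Eventually.of_forall fun k => by omega)
    have g3 := ((hlimi j).sub g2).add g1
    simpa using g3
  have hfb : ∀ i, IsProxPt α (h i) ((∑ j, W i j • xbar j) - α • f' i (xbar i)) (xbar i) := by
    intro i
    choose l hl1 hl2 hlK using fun k => hB i (φ k)
    have hge := hφt.eventually_ge_atTop D
    have hxl : Tendsto (fun k => x (l k) i) atTop (nhds (xbar i)) := by
      apply hnear
      · exact Eventually.of_forall fun k => by have := hl1 k; omega
      · filter_upwards [hge] with k hk
        have := hl2 k; omega
    have hf'c : Continuous (f' i) :=
      (LipschitzWith.of_dist_le_mul (K := ⟨L i, (hL i).le⟩) (fun a b => by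
        rw [dist_eq_norm, dist_eq_norm]; exact hlip i a b)).continuous
    refine prox_closed hα0 (hh i)
      (u := fun k => (∑ j, W i j • x (s i j (l k)) j) - α • f' i (x (l k) i))
      (p := fun k => x (l k + 1) i) (fun k => hupd i (l k) (hlK k)) ?_ ?_
    · refine Tendsto.sub (tendsto_finsetSum _ fun j _ => Tendsto.const_smul ?_ _)
        (Tendsto.const_smul ((hf'c.tendsto _).comp hxl) _)
      apply hnear
      · filter_upwards with k
        have := hD i j (l k) (hlK k)
        have := hl1 k
        omega
      · filter_upwards [hge] with k hk
        have := hl2 k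
        have := hs_le i j (l k)
        omega
    · apply hnear i (fun k => l k + 1)
      · exact Eventually.of_forall fun k => by have := hl1 k; omega
      · filter_upwards [hge] with k hk
        have := hl2 k; omega
  refine ⟨xbar, hfb, ?_⟩
  obtain ⟨M, -, hM, -⟩ := hdist xbar hfb
  rw [tendsto_pi_nhds]
  intro i
  have hM0 : M = 0 := by
    have g1 := (hM i).comp hφt
    have g2 : Tendsto (fun k => ‖x (φ k) i - xbar i‖ ^ 2) atTop (nhds 0) := by
      have := (((hlimi i).sub_const (xbar i)).norm).pow 2
      simpa using this
    exact tendsto_nhds_unique g1 g2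
  have g := (hM i).sqrt
  rw [hM0, Real.sqrt_zero] at g
  rw [tendsto_iff_norm_sub_tendsto_zero]
  simpa [Real.sqrt_sq] using g
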